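/- Let 0 < t₂ < t₁ be reals. Define for α ∈ (0,1) the maximum sum-rate loss per user h(α) = log₂(1 + α·(t₁ − t₂)/(t₂ + (1−α)·t₁ + 2·√((1−α)·t₁·t₂))). Then h is strictly increasing on (0,1), h(α) → log₂(t₁/t₂) as α → 1⁻, and consequently h(α) < log₂(t₁/t₂) for every α ∈ (0,1); that is, the maximum rate loss under coarse quantization (α < 1) is strictly smaller than its high-resolution (α → 1) value. -/

import Mathlib

open Filter

/-!
With `s = √(1 - α)`, both the denominator in `h` and its sum with the numerator are perfect
squares, namely `(√t₂ + √t₁ s)²` and `(√t₁ + √t₂ s)²`. Thus `h α` is twice the logarithm of the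
Möbius function `(√t₁ + √t₂ s) / (√t₂ + √t₁ s)`, which is strictly decreasing in `s ≥ 0` since
`t₂ < t₁`; and `s` decreases to `0` as `α` increases to `1`.
-/

open scoped Topology

theorem strictAntiOn_add_mul_div_add_mul {K : Type*} [Field K] [LinearOrder K]
    [IsStrictOrderedRing K] {a b c d : K} (hc : 0 < c) (hd : 0 ≤ d) (hdet : b * c < a * d) :
    StrictAntiOn (fun s ↦ (a + b * s) / (c + d * s)) (Set.Ici 0) := by
  intro s hs t ht hst
  have denom_pos {r : K} (hr : r ∈ Set.Ici 0) : 0 < c + d * r :=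
    add_pos_of_pos_of_nonneg hc (mul_nonneg hd hr)
  have cross_diff_pos : 0 < (a * d - b * c) * (t - s) :=
    mul_pos (sub_pos.2 hdet) (sub_pos.2 hst)
  refine (div_lt_div_iff₀ (denom_pos ht) (denom_pos hs)).2 ?_
  linear_combination cross_diff_pos

theorem strictAntiOn_sqrt_one_sub : StrictAntiOn (fun α : ℝ ↦ √(1 - α)) (Set.Iic 1) :=
  fun _ _ _ hβ hαβ ↦ Real.sqrt_lt_sqrt (sub_nonneg.2 hβ) (sub_lt_sub_left hαβ 1)

theorem sq_sqrt_add_sqrt_mul_sqrt {x y z : ℝ} (hx : 0 ≤ x) (hy : 0 ≤ y) (hz : 0 ≤ z) :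
    (√x + √y * √z) ^ 2 = x + z * y + 2 * √(z * y * x) := by
  rw [Real.sqrt_mul (mul_nonneg hz hy), Real.sqrt_mul hz, add_sq, mul_pow, Real.sq_sqrt hx,
    Real.sq_sqrt hy, Real.sq_sqrt hz]
  ring

theorem sqrt_add_sqrt_mul_sqrt_pos {x : ℝ} (hx : 0 < x) (y z : ℝ) : 0 < √x + √y * √z :=
  add_pos_of_pos_of_nonneg (Real.sqrt_pos.2 hx) (by positivity)

/-- The maximum over the total power of the zero-forcing sum-rate loss per user at quantization
gain `α`, where `t₁` and `t₂` are the traces of the inverse Gram matrices of the smaller and the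
larger antenna subset. Rates are measured in logarithms to base `b`. The formula is meant for
`α ≤ 1`, where the radicand is nonnegative. -/
noncomputable def maxRateLoss (b t₁ t₂ α : ℝ) : ℝ :=
  Real.logb b (1 + α * (t₁ - t₂) / (t₂ + (1 - α) * t₁ + 2 * √((1 - α) * t₁ * t₂)))

/-- The Möbius function of `√(1 - α)` whose square is the argument of the logarithm in
`maxRateLoss`. -/
noncomputable def amplitudeRatio (t₁ t₂ α : ℝ) : ℝ :=
  (√t₁ + √t₂ * √(1 - α)) / (√t₂ + √t₁ * √(1 - α))

section

variable {b t₁ t₂ α : ℝ}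

theorem amplitudeRatio_pos (ht₁ : 0 < t₁) (ht₂ : 0 < t₂) (α : ℝ) : 0 < amplitudeRatio t₁ t₂ α :=
  div_pos (sqrt_add_sqrt_mul_sqrt_pos ht₁ t₂ _) (sqrt_add_sqrt_mul_sqrt_pos ht₂ t₁ _)

theorem amplitudeRatio_sq (ht₁ : 0 ≤ t₁) (ht₂ : 0 < t₂) (hα : α ≤ 1) :
    amplitudeRatio t₁ t₂ α ^ 2 =
      1 + α * (t₁ - t₂) / (t₂ + (1 - α) * t₁ + 2 * √((1 - α) * t₁ * t₂)) := by
  have hs : 0 ≤ 1 - α := sub_nonneg.2 hα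
  have num_sq := sq_sqrt_add_sqrt_mul_sqrt ht₁ ht₂.le hs
  have denom_sq := sq_sqrt_add_sqrt_mul_sqrt ht₂.le ht₁ hs
  have denom_ne : (√t₂ + √t₁ * √(1 - α)) ^ 2 ≠ 0 :=
    (pow_pos (sqrt_add_sqrt_mul_sqrt_pos ht₂ t₁ _) 2).ne'
  rw [amplitudeRatio, div_pow, ← denom_sq, one_add_div denom_ne, num_sq, denom_sq,
    mul_right_comm _ t₂]
  ring

theorem maxRateLoss_eq_two_mul_logb (b : ℝ) (ht₁ : 0 ≤ t₁) (ht₂ : 0 < t₂) (hα : α ≤ 1) :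
    maxRateLoss b t₁ t₂ α = 2 * Real.logb b (amplitudeRatio t₁ t₂ α) := by
  rw [maxRateLoss, ← amplitudeRatio_sq ht₁ ht₂ hα, Real.logb_pow, Nat.cast_ofNat]

theorem strictMonoOn_amplitudeRatio (ht₂ : 0 < t₂) (ht : t₂ < t₁) :
    StrictMonoOn (amplitudeRatio t₁ t₂) (Set.Iic 1) := by
  have hdet : √t₂ * √t₂ < √t₁ * √t₁ := by
    rwa [Real.mul_self_sqrt ht₂.le, Real.mul_self_sqrt (ht₂.trans ht).le]
  have mobius := strictAntiOn_add_mul_div_add_mul (Real.sqrt_pos.2 ht₂) (Real.sqrt_nonneg t₁) hdet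
  exact mobius.comp strictAntiOn_sqrt_one_sub fun _ _ ↦ Real.sqrt_nonneg _

theorem strictMonoOn_maxRateLoss (hb : 1 < b) (ht₂ : 0 < t₂) (ht : t₂ < t₁) :
    StrictMonoOn (maxRateLoss b t₁ t₂) (Set.Iic 1) := by
  have ht₁ : 0 < t₁ := ht₂.trans ht
  intro α hα β hβ hαβ
  rw [maxRateLoss_eq_two_mul_logb b ht₁.le ht₂ hα, maxRateLoss_eq_two_mul_logb b ht₁.le ht₂ hβ]
  gcongr
  · exact amplitudeRatio_pos ht₁ ht₂ α
  · exact strictMonoOn_amplitudeRatio ht₂ ht hα hβ hαβ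

theorem continuousOn_maxRateLoss (b : ℝ) (ht₁ : 0 < t₁) (ht₂ : 0 < t₂) :
    ContinuousOn (maxRateLoss b t₁ t₂) (Set.Iic 1) := by
  have ratio_continuous : Continuous (amplitudeRatio t₁ t₂) :=
    .div (by fun_prop) (by fun_prop) fun _ ↦ (sqrt_add_sqrt_mul_sqrt_pos ht₂ t₁ _).ne'
  have logb_continuous : Continuous fun α ↦ Real.logb b (amplitudeRatio t₁ t₂ α) :=
    ratio_continuous.logb fun α ↦ (amplitudeRatio_pos ht₁ ht₂ α).ne'
  exact (logb_continuous.const_mul 2).continuousOn.congr fun _ hα ↦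
    maxRateLoss_eq_two_mul_logb b ht₁.le ht₂ hα

theorem maxRateLoss_one (b t₁ : ℝ) (ht₂ : t₂ ≠ 0) :
    maxRateLoss b t₁ t₂ 1 = Real.logb b (t₁ / t₂) := by
  simp [maxRateLoss, one_add_div ht₂]

theorem stmt7_general (hb : 1 < b) (ht₂ : 0 < t₂) (ht : t₂ < t₁) :
    StrictMonoOn (maxRateLoss b t₁ t₂) (Set.Iic 1) ∧
      Tendsto (maxRateLoss b t₁ t₂) (𝓝[<] 1) (𝓝 (Real.logb b (t₁ / t₂))) ∧
      ∀ α < 1, maxRateLoss b t₁ t₂ α < Real.logb b (t₁ / t₂) := by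
  have mono := strictMonoOn_maxRateLoss hb ht₂ ht
  have cont := continuousOn_maxRateLoss b (ht₂.trans ht) ht₂ 1 Set.self_mem_Iic
  rw [← maxRateLoss_one b t₁ ht₂.ne']
  exact ⟨mono, cont.mono Set.Iio_subset_Iic_self, fun _ hα ↦ mono hα.le Set.self_mem_Iic hα⟩

end

/-- For `0 < t₂ < t₁` and the maximum per-user sum-rate loss
`h α = log₂(1 + α(t₁-t₂)/(t₂+(1-α)t₁+2√((1-α)t₁t₂)))`, the function `h` is strictly increasing
on `(0,1)`, tends to `log₂(t₁/t₂)` as `α → 1⁻`, and `h α < log₂(t₁/t₂)` for every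
`α ∈ (0,1)`. -/
theorem stmt7 (t₁ t₂ : ℝ) (ht₂ : 0 < t₂) (ht : t₂ < t₁)
    (h : ℝ → ℝ)
    (hh : ∀ α, h α = Real.logb 2
      (1 + α * (t₁ - t₂) / (t₂ + (1 - α) * t₁ + 2 * Real.sqrt ((1 - α) * t₁ * t₂)))) :
    StrictMonoOn h (Set.Ioo 0 1) ∧
      Tendsto h (nhdsWithin 1 (Set.Iio 1)) (nhds (Real.logb 2 (t₁ / t₂))) ∧
      ∀ α ∈ Set.Ioo (0 : ℝ) 1, h α < Real.logb 2 (t₁ / t₂) := by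
  obtain rfl : h = maxRateLoss 2 t₁ t₂ := funext hh
  exact (stmt7_general one_lt_two ht₂ ht).imp (·.mono fun _ hα ↦ hα.2.le)
    (And.imp_right fun lt α hα ↦ lt α hα.2)
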